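/- Let G = (V, E) be a finite tree (a simple connected acyclic graph) with |V| ≥ 2, and let i ∈ V be a leaf (a vertex of degree 1), so that G − i is connected. Let φ be an eigenvector of L_i associated to the smallest eigenvalue of L_i, normalized so that φ ≥ 0, and extend φ to V by φ(i) = 0. Then φ is strictly increasing with graph distance from i: whenever u and v are adjacent vertices with dist(i, u) = dist(i, v) − 1, one has φ(u) < φ(v). -/

import Mathlib

/-!
Extended by `φ i = 0`, the eigenvector satisfies `(L φ) v = μ φ v` at every `v ≠ i`.

* `φ > 0` off `i`: at a zero of `φ` off `i` the equation forces all neighbours to be zeros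
  (because `φ ≥ 0`), so zeros would spread over the connected graph `G - i`.
* `μ > 0`: the entries of `L φ` sum to zero over `V`, and `(L φ) i` is negative because `i` has a
  neighbour and `φ` is positive there.
* In a tree rooted at `i`, every vertex `v ≠ i` has one neighbour `u` closer to `i`, and all other
  neighbours `w` are one step farther. The equation at `v` reads
  `φ v - φ u = μ φ v + ∑ w, (φ w - φ v)`, so the claim for the edges below `v` gives it for the
  edge `u v`: this is an induction descending in the distance from `i`, whose base case, at the
  leaves, is an empty sum.
-/

open Matrix

/-- The matrix `L_i`: the Laplacian `L = D - A` of `G` with the row and column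
indexed by `i` deleted. -/
noncomputable def lapMinor {V : Type*} [Fintype V] [DecidableEq V]
    (G : SimpleGraph V) [DecidableRel G.Adj] (i : V) :
    Matrix {v : V // v ≠ i} {v : V // v ≠ i} ℝ :=
  (G.lapMatrix ℝ).submatrix Subtype.val Subtype.val

/-- The Laplacian applied to `φ`, as a sum of differences along the edges at `v`. -/
lemma lapMatrix_mulVec_eq_sum_sub {V : Type*} [Fintype V] [DecidableEq V]
    (G : SimpleGraph V) [DecidableRel G.Adj] (φ : V → ℝ) (v : V) :
    (G.lapMatrix ℝ *ᵥ φ) v = ∑ w ∈ G.neighborFinset v, (φ v - φ w) := by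
  rw [SimpleGraph.lapMatrix_mulVec_apply, Finset.sum_sub_distrib]
  simp

lemma sum_lapMatrix_mulVec {V : Type*} [Fintype V] [DecidableEq V]
    (G : SimpleGraph V) [DecidableRel G.Adj] (φ : V → ℝ) :
    ∑ v, (G.lapMatrix ℝ *ᵥ φ) v = 0 := by
  have h : (fun _ : V => (1 : ℝ)) ⬝ᵥ (G.lapMatrix ℝ *ᵥ φ) = 0 := by
    rw [dotProduct_mulVec, ← mulVec_transpose, (G.isSymm_lapMatrix (R := ℝ)).eq,
      SimpleGraph.lapMatrix_mulVec_const_eq_zero, zero_dotProduct]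
  simpa [dotProduct] using h

/-- Deleting the coordinate `i` does not affect the product when `φ` vanishes there. -/
lemma lapMinor_mulVec_apply {V : Type*} [Fintype V] [DecidableEq V]
    (G : SimpleGraph V) [DecidableRel G.Adj] (i : V) (φ : V → ℝ) (hφi : φ i = 0)
    (v : {v : V // v ≠ i}) :
    (lapMinor G i).mulVec (fun w : {w : V // w ≠ i} => φ w.1) v = (G.lapMatrix ℝ *ᵥ φ) v.1 := by
  simp only [lapMinor, mulVec, dotProduct, submatrix_apply]
  rw [← Finset.add_sum_erase _ _ (Finset.mem_univ i), hφi, mul_zero, zero_add]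
  exact (Finset.sum_subtype (Finset.univ.erase i) (p := fun w => w ≠ i) (by simp)
    (fun w => G.lapMatrix ℝ v.1 w * φ w)).symm

/-- In a tree rooted at `i`, a vertex has at most one neighbour closer to the root. -/
lemma parent_unique {V : Type*} {G : SimpleGraph V} (hconn : G.Connected)
    (hacyc : G.IsAcyclic) {i u w v : V} (hu : G.Adj u v) (hw : G.Adj w v)
    (hdu : G.dist i u + 1 = G.dist i v) (hdw : G.dist i w + 1 = G.dist i v) : u = w := by
  obtain ⟨p, hp⟩ := hconn.exists_walk_length_eq_dist i u
  obtain ⟨q, hq⟩ := hconn.exists_walk_length_eq_dist i w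
  have hp' : (p.concat hu).IsPath :=
    SimpleGraph.Walk.isPath_of_length_eq_dist _ (by simp [hp, hdu])
  have hq' : (q.concat hw).IsPath :=
    SimpleGraph.Walk.isPath_of_length_eq_dist _ (by simp [hq, hdw])
  have h := congrArg Subtype.val ((hacyc.subsingleton_path i v).elim ⟨_, hp'⟩ ⟨_, hq'⟩)
  simpa using congrArg SimpleGraph.Walk.penultimate h

/-- The induction up the tree, for a positive function with `(L φ) v = μ φ v` off the root. -/
lemma lt_of_parent {V : Type*} [Fintype V] [DecidableEq V]
    (G : SimpleGraph V) [DecidableRel G.Adj]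
    (hconn : G.Connected) (hacyc : G.IsAcyclic) (i : V) {μ : ℝ} (hμ : 0 < μ) (φ : V → ℝ)
    (hpos : ∀ v, v ≠ i → 0 < φ v)
    (hlap : ∀ v, v ≠ i → ∑ w ∈ G.neighborFinset v, (φ v - φ w) = μ * φ v) (u v : V)
    (huv : G.Adj u v) (hd : G.dist i u + 1 = G.dist i v) : φ u < φ v := by
  have hbdd : ∀ x, G.dist i x ≤ Finset.univ.sup (G.dist i) :=
    fun x => Finset.le_sup (f := G.dist i) (Finset.mem_univ x)
  have hvi : v ≠ i := by
    rintro rfl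
    simp at hd
  have h := hlap v hvi
  rw [← Finset.add_sum_erase _ _ ((G.mem_neighborFinset v u).2 huv.symm)] at h
  have hchildren : ∑ w ∈ (G.neighborFinset v).erase u, (φ v - φ w) ≤ 0 := by
    refine Finset.sum_nonpos fun w hw => ?_
    rw [Finset.mem_erase, SimpleGraph.mem_neighborFinset] at hw
    have hdw : G.dist i v + 1 = G.dist i w := by
      rcases hacyc.dist_eq_dist_add_one_of_adj_of_reachable i hw.2 (hconn i v) with h1 | h1
      · exact absurd (parent_unique hconn hacyc hw.2.symm huv h1.symm hd) hw.1
      · exact h1.symm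
    exact sub_nonpos.2 (lt_of_parent G hconn hacyc i hμ φ hpos hlap v w hw.2 hdw).le
  have := mul_pos hμ (hpos v hvi)
  linarith
termination_by Finset.univ.sup (G.dist i) - G.dist i v
decreasing_by
  have := hbdd w
  omega

theorem stmt_8 {V : Type*} [Fintype V] [DecidableEq V]
    (G : SimpleGraph V) [DecidableRel G.Adj]
    (hconn : G.Connected) (hacyc : G.IsAcyclic) (hcard : 2 ≤ Fintype.card V)
    (i : V) (hleaf : G.degree i = 1)
    (hconn' : (G.induce {v : V | v ≠ i}).Connected)
    (μ : ℝ)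
    (hμ : IsLeast {μ' : ℝ | ∃ ψ : {v : V // v ≠ i} → ℝ, ψ ≠ 0 ∧
        (lapMinor G i).mulVec ψ = μ' • ψ} μ)
    -- φ : V → ℝ is the extension by φ i = 0 of an eigenvector of L_i
    -- for the smallest eigenvalue μ, normalized so that φ ≥ 0
    (φ : V → ℝ) (hφi : φ i = 0)
    (hφne : (fun v : {v : V // v ≠ i} => φ v.1) ≠ 0)
    (heig : (lapMinor G i).mulVec (fun v : {v : V // v ≠ i} => φ v.1) =
      μ • fun v : {v : V // v ≠ i} => φ v.1)
    (hnonneg : ∀ v : V, 0 ≤ φ v) :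
    ∀ u v : V, G.Adj u v → G.dist i u + 1 = G.dist i v → φ u < φ v := by
  have hlap : ∀ v, v ≠ i → ∑ w ∈ G.neighborFinset v, (φ v - φ w) = μ * φ v := by
    intro v hv
    rw [← lapMatrix_mulVec_eq_sum_sub, ← lapMinor_mulVec_apply G i φ hφi ⟨v, hv⟩, heig]
    rfl
  -- zeros of `φ` off `i` propagate to neighbours
  have hzero : ∀ v w, v ≠ i → G.Adj v w → φ v = 0 → φ w = 0 := by
    intro v w hv hvw h0
    have h := hlap v hv
    simp only [h0, zero_sub, mul_zero, Finset.sum_neg_distrib, neg_eq_zero] at h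
    exact (Finset.sum_eq_zero_iff_of_nonneg fun x _ => hnonneg x).1 h w
      ((G.mem_neighborFinset v w).2 hvw)
  have hpos : ∀ v, v ≠ i → 0 < φ v := by
    intro v hv
    refine lt_of_le_of_ne (hnonneg v) fun h0 => hφne ?_
    funext x
    obtain ⟨p⟩ := hconn'.preconnected ⟨v, hv⟩ x
    have key : ∀ (a b : {v : V | v ≠ i}) (_ : (G.induce {v : V | v ≠ i}).Walk a b),
        φ a.1 = 0 → φ b.1 = 0 := by
      intro a b q
      induction q with
      | nil => exact id
      | @cons a b c hab _ ih => exact fun ha => ih (hzero a.1 b.1 a.2 hab ha)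
    exact key _ _ p h0.symm
  have hμpos : 0 < μ := by
    obtain ⟨j, hj⟩ : (G.neighborFinset i).Nonempty := by
      rw [← Finset.card_pos, SimpleGraph.card_neighborFinset_eq_degree, hleaf]
      exact one_pos
    have hji : j ≠ i := ((G.mem_neighborFinset i j).1 hj).ne'
    have hneg : (G.lapMatrix ℝ *ᵥ φ) i < 0 := by
      rw [lapMatrix_mulVec_eq_sum_sub]
      refine Finset.sum_neg' (fun x _ => ?_) ⟨j, hj, ?_⟩
      · linarith [hnonneg x]
      · linarith [hpos j hji]
    have hsum := sum_lapMatrix_mulVec G φ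
    rw [← Finset.add_sum_erase _ _ (Finset.mem_univ i)] at hsum
    have hrest : ∑ v ∈ Finset.univ.erase i, (G.lapMatrix ℝ *ᵥ φ) v =
        μ * ∑ v ∈ Finset.univ.erase i, φ v := by
      rw [Finset.mul_sum]
      refine Finset.sum_congr rfl fun v hv => ?_
      rw [lapMatrix_mulVec_eq_sum_sub, hlap v (Finset.ne_of_mem_erase hv)]
    rw [hrest] at hsum
    exact pos_of_mul_pos_left (by linarith) (Finset.sum_nonneg fun v _ => hnonneg v)
  exact lt_of_parent G hconn hacyc i hμpos φ hpos hlap
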